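/- Let u : ℝ² → ℝ be defined by u(x₁,x₂) = ∫₀^{|x₁|} √(1 - e^{-s}) ds for |x₁| ≥ 1 (extended smoothly for |x₁| < 1 with |φ'| < 1). Then the curve α(s) = (s, 0, u(s,0)) in the graph Σ(u) ⊂ ℝ³₁, with the induced Lorentzian-graph metric, has finite length: ∫_{-∞}^{∞} ‖α'(s)‖ ds < 2(1 + 2/√e). Hence there exists an entire spacelike graph in ℝ²×ℝ₁ that is not complete. -/

import Mathlib

open MeasureTheory

/-!
Put `H x = ∫₀ˣ √(1 - e⁻ˢ) ds`. It is smooth only away from `0`, so `H |x|` is not smooth; but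
`|x|` can be replaced by a smooth `A > 0` with `|A'| ≤ 1` and `A x = |x|` for `|x| ≥ 1`. Since
`H' < 1`, the function `H ∘ A` has slope less than `1` everywhere.

Whatever the extension to `|s| < 1`, the induced speed is `e^(-|s|/2)` for `|s| ≥ 1` and at most `1`
in between. The tails contribute `4 / √e` and the middle contributes less than `2`, because
the speed at `s = 1` is `e^(-1/2) < 1` and the speed is continuous.
-/

open Real Set Filter Topology
open scoped ContDiff

section Calculus

lemma contDiffOn_intervalIntegral {E : Type*} [NormedAddCommGroup E] [NormedSpace ℝ E]
    [CompleteSpace E] {f : ℝ → E} {s : Set ℝ}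
    (hf : Continuous f) (hs : IsOpen s) (hfs : ContDiffOn ℝ ∞ f s) (a : ℝ) :
    ContDiffOn ℝ ∞ (fun x => ∫ t in a..x, f t) s := by
  rw [contDiffOn_infty_iff_deriv_of_isOpen hs]
  refine ⟨fun x _ => (hf.integral_hasStrictDerivAt a x).hasDerivAt.differentiableAt
    |>.differentiableWithinAt, ?_⟩
  rwa [show deriv (fun x => ∫ t in a..x, f t) = f from
    funext fun x => hf.deriv_integral f a x]

lemma norm_fderiv_comp_fst_le {𝕜 E F G : Type*} [NontriviallyNormedField 𝕜]
    [NormedAddCommGroup E] [NormedSpace 𝕜 E] [NormedAddCommGroup F] [NormedSpace 𝕜 F]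
    [NormedAddCommGroup G] [NormedSpace 𝕜 G] {φ : E → G} {p : E × F}
    (hφ : DifferentiableAt 𝕜 φ p.1) :
    ‖fderiv 𝕜 (fun q : E × F => φ q.1) p‖ ≤ ‖fderiv 𝕜 φ p.1‖ := by
  have h : HasFDerivAt (fun q : E × F => φ q.1)
      ((fderiv 𝕜 φ p.1).comp (ContinuousLinearMap.fst 𝕜 E F)) p :=
    hφ.hasFDerivAt.comp p hasFDerivAt_fst
  rw [h.fderiv]
  exact (ContinuousLinearMap.opNorm_comp_le _ _).trans
    (mul_le_of_le_one_right (norm_nonneg _) (ContinuousLinearMap.norm_fst_le 𝕜 E F))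

lemma abs_deriv_comp_abs {f : ℝ → ℝ} {f' s : ℝ} (hf : HasDerivAt f f' |s|) (hs : s ≠ 0) :
    |deriv (fun t => f |t|) s| = |f'| := by
  have h : HasDerivAt (fun t => f |t|) (f' * SignType.sign s) s := hf.comp s (hasDerivAt_abs hs)
  rw [h.deriv, abs_mul]
  rcases hs.lt_or_gt with hs | hs <;> simp [hs]

end Calculus

section SmoothAbs

/-- A smooth odd function with values in `[-1, 1]`, equal to the sign of `x` for `1 ≤ |x|`. It is
the derivative of `smoothAbs`. -/
noncomputable def smoothSign (x : ℝ) : ℝ := smoothTransition x - smoothTransition (-x)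

lemma smoothSign_neg (x : ℝ) : smoothSign (-x) = -smoothSign x := by
  simp [smoothSign]

lemma contDiff_smoothSign : ContDiff ℝ ∞ smoothSign :=
  smoothTransition.contDiff.sub (smoothTransition.contDiff.comp contDiff_neg)

lemma abs_smoothSign_le_one (x : ℝ) : |smoothSign x| ≤ 1 :=
  abs_sub_le_of_nonneg_of_le (smoothTransition.nonneg x) (smoothTransition.le_one x)
    (smoothTransition.nonneg (-x)) (smoothTransition.le_one (-x))

lemma smoothSign_of_one_le {x : ℝ} (hx : 1 ≤ x) : smoothSign x = 1 := by
  rw [smoothSign, smoothTransition.one_of_one_le hx,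
    smoothTransition.zero_of_nonpos (by linarith), sub_zero]

lemma smoothSign_lt_one {x : ℝ} (hx : x < 1) : smoothSign x < 1 :=
  (sub_le_self _ (smoothTransition.nonneg _)).trans_lt (smoothTransition.lt_one_of_lt_one hx)

/-- A smooth, positive, even and `1`-Lipschitz regularization of the absolute value, which it
equals for `1 ≤ |x|`. -/
noncomputable def smoothAbs (x : ℝ) : ℝ := 1 + ∫ t in (1 : ℝ)..x, smoothSign t

lemma hasDerivAt_smoothAbs (x : ℝ) : HasDerivAt smoothAbs (smoothSign x) x :=
  (contDiff_smoothSign.continuous.integral_hasStrictDerivAt 1 x).hasDerivAt.const_add 1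

lemma contDiff_smoothAbs : ContDiff ℝ ∞ smoothAbs :=
  contDiff_const.add <| contDiffOn_univ.1 <|
    contDiffOn_intervalIntegral contDiff_smoothSign.continuous isOpen_univ
      contDiff_smoothSign.contDiffOn 1

lemma smoothAbs_neg (x : ℝ) : smoothAbs (-x) = smoothAbs x := by
  have hderiv (y : ℝ) : HasDerivAt (fun z => smoothAbs (-z) - smoothAbs z) 0 y := by
    have hneg := (hasDerivAt_smoothAbs (-y)).comp y (hasDerivAt_neg y)
    rw [smoothSign_neg, neg_mul_neg, mul_one] at hneg
    simpa only [sub_self] using! hneg.sub (hasDerivAt_smoothAbs y)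
  have hconst := is_const_of_deriv_eq_zero (fun y => (hderiv y).differentiableAt)
    (fun y => (hderiv y).deriv) x 0
  simpa [sub_eq_zero] using hconst

lemma smoothAbs_abs (x : ℝ) : smoothAbs |x| = smoothAbs x := by
  rcases abs_choice x with h | h <;> simp [h, smoothAbs_neg]

lemma smoothAbs_of_one_le_abs {x : ℝ} (hx : 1 ≤ |x|) : smoothAbs x = |x| := by
  have hsign : EqOn smoothSign (fun _ => 1) (uIcc 1 |x|) := fun t ht =>
    smoothSign_of_one_le (uIcc_of_le hx ▸ ht).1
  rw [← smoothAbs_abs, smoothAbs, intervalIntegral.integral_congr hsign]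
  simp

lemma self_lt_smoothAbs {x : ℝ} (hx : x < 1) : x < smoothAbs x := by
  have hmean := (convex_Iic (1 : ℝ)).image_sub_lt_mul_sub_of_deriv_lt (C := 1)
    contDiff_smoothAbs.continuous.continuousOn
    (fun y _ => (hasDerivAt_smoothAbs y).differentiableAt.differentiableWithinAt)
    (fun y hy => by
      rw [(hasDerivAt_smoothAbs y).deriv]
      exact smoothSign_lt_one (by simpa using hy))
    x hx.le 1 self_mem_Iic hx
  have hone : smoothAbs 1 = 1 := by simpa using smoothAbs_of_one_le_abs (x := 1) (by simp)
  linarith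

lemma smoothAbs_pos (x : ℝ) : 0 < smoothAbs x := by
  rw [← smoothAbs_abs]
  rcases lt_or_ge |x| 1 with hx | hx
  · exact (abs_nonneg x).trans_lt (self_lt_smoothAbs hx)
  · rw [smoothAbs_abs, smoothAbs_of_one_le_abs hx]
    linarith

end SmoothAbs

section Profile

/-- The slope `√(1 - e⁻ˢ)`, for which the induced speed `√(1 - slope²)` is `e^(-s/2)`. For `s < 0`
its value is `0`, the junk value of the square root. -/
noncomputable def decaySlope (s : ℝ) : ℝ := √(1 - exp (-s))

lemma continuous_decaySlope : Continuous decaySlope := by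
  unfold decaySlope
  fun_prop

lemma decaySlope_nonneg (s : ℝ) : 0 ≤ decaySlope s := sqrt_nonneg _

lemma decaySlope_lt_one (s : ℝ) : decaySlope s < 1 := by
  rw [decaySlope, sqrt_lt' one_pos, one_pow]
  exact sub_lt_self 1 (exp_pos _)

lemma sqrt_one_sub_decaySlope_sq {s : ℝ} (hs : 0 ≤ s) :
    √(1 - decaySlope s ^ 2) = exp (-s / 2) := by
  rw [decaySlope, sq_sqrt (by simpa using hs), sub_sub_cancel, exp_half]

lemma contDiffOn_decaySlope : ContDiffOn ℝ ∞ decaySlope (Ioi 0) := by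
  refine ContDiffOn.sqrt (by fun_prop) fun s hs => ?_
  have : exp (-s) < 1 := by simpa using hs
  exact (sub_pos.2 this).ne'

/-- The primitive `∫₀ˣ √(1 - e⁻ˢ) ds`, i.e. the paper's `u(x₁, x₂)` as a function of `x = |x₁|`. -/
noncomputable def decayHeight (x : ℝ) : ℝ := ∫ s in (0 : ℝ)..x, decaySlope s

lemma hasDerivAt_decayHeight (x : ℝ) : HasDerivAt decayHeight (decaySlope x) x :=
  (continuous_decaySlope.integral_hasStrictDerivAt 0 x).hasDerivAt

lemma contDiffOn_decayHeight : ContDiffOn ℝ ∞ decayHeight (Ioi 0) :=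
  contDiffOn_intervalIntegral continuous_decaySlope isOpen_Ioi contDiffOn_decaySlope 0

lemma decayHeight_eq_setIntegral {x : ℝ} (hx : 0 ≤ x) :
    decayHeight x = ∫ s in Ioc 0 x, √(1 - exp (-s)) :=
  intervalIntegral.integral_of_le hx

/-- A smooth function of slope less than `1` extending `x ↦ decayHeight |x|` from `1 ≤ |x|` to the
whole line. The graph of `(x₁, x₂) ↦ profile x₁` is the incomplete spacelike graph. -/
noncomputable def profile (x : ℝ) : ℝ := decayHeight (smoothAbs x)

lemma contDiff_profile : ContDiff ℝ ∞ profile :=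
  contDiffOn_decayHeight.comp_contDiff contDiff_smoothAbs smoothAbs_pos

lemma profile_of_one_le_abs {x : ℝ} (hx : 1 ≤ |x|) : profile x = decayHeight |x| := by
  rw [profile, smoothAbs_of_one_le_abs hx]

lemma abs_deriv_profile_lt_one (x : ℝ) : |deriv profile x| < 1 := by
  have hderiv : HasDerivAt profile (decaySlope (smoothAbs x) * smoothSign x) x :=
    (hasDerivAt_decayHeight (smoothAbs x)).comp x (hasDerivAt_smoothAbs x)
  rw [hderiv.deriv, abs_mul, abs_of_nonneg (decaySlope_nonneg _)]
  exact (mul_le_of_le_one_right (decaySlope_nonneg _) (abs_smoothSign_le_one x)).trans_lt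
    (decaySlope_lt_one _)

end Profile

section Length

variable {w : ℝ → ℝ} {a c : ℝ}

lemma integrableOn_Ioi_of_eqOn_exp_neg_mul (hc : 0 < c) (hw : Continuous w)
    (htail : EqOn w (fun s => exp (-c * s)) (Ioi a)) (b : ℝ) : IntegrableOn w (Ioi b) :=
  integrable_of_isBigO_exp_neg hc hw.continuousOn
    (htail.eventuallyEq_of_mem (Ioi_mem_atTop a)).isBigO

lemma setIntegral_Ioi_zero_lt_of_eqOn_exp_neg_mul (hc : 0 < c) (ha : 0 < a) (hw : Continuous w)
    (hw_le : ∀ s, w s ≤ 1) (htail : EqOn w (fun s => exp (-c * s)) (Ioi a)) :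
    ∫ s in Ioi 0, w s < a + exp (-c * a) / c := by
  have htail_integral : ∫ s in Ioi a, w s = exp (-c * a) / c := by
    rw [setIntegral_congr_fun measurableSet_Ioi htail, integral_exp_mul_Ioi (neg_lt_zero.2 hc),
      neg_div_neg_eq]
  have hw_lt : w a < 1 := by
    have hwa : w a = exp (-c * a) :=
      htail.closure hw (by fun_prop) (closure_Ioi a ▸ self_mem_Ici)
    rw [hwa, exp_lt_one_iff]
    exact mul_neg_of_neg_of_pos (neg_lt_zero.2 hc) ha
  have hmiddle : ∫ s in (0 : ℝ)..a, w s < a := by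
    simpa using intervalIntegral.integral_lt_integral_of_continuousOn_of_le_of_exists_lt ha
      hw.continuousOn (continuousOn_const (c := (1 : ℝ))) (fun s _ => hw_le s)
      ⟨a, right_mem_Icc.2 ha.le, hw_lt⟩
  have hint := integrableOn_Ioi_of_eqOn_exp_neg_mul hc hw htail
  rw [← intervalIntegral.integral_interval_add_Ioi (hint 0) (hint a), htail_integral]
  gcongr

lemma integrable_and_integral_lt_of_eq_exp_neg_mul_abs (hc : 0 < c) (ha : 0 < a) (hw : Continuous w)
    (hw_le : ∀ s, w s ≤ 1) (htail : ∀ s, a < |s| → w s = exp (-c * |s|)) :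
    Integrable w ∧ ∫ s, w s < 2 * (a + exp (-c * a) / c) := by
  have hright : EqOn w (fun s => exp (-c * s)) (Ioi a) := fun s hs => by
    have habs : |s| = s := abs_of_pos (ha.trans hs)
    simpa only [habs] using htail s (habs.symm ▸ hs)
  have hleft : EqOn (fun s => w (-s)) (fun s => exp (-c * s)) (Ioi a) := fun s hs => by
    have habs : |-s| = s := (abs_neg s).trans (abs_of_pos (ha.trans hs))
    simpa only [habs] using htail (-s) (habs.symm ▸ hs)
  have hw_neg : Continuous fun s => w (-s) := by fun_prop
  have hint_right := integrableOn_Ioi_of_eqOn_exp_neg_mul hc hw hright 0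
  have hint_left : IntegrableOn w (Iic 0) := by
    have := (integrableOn_Ioi_of_eqOn_exp_neg_mul hc hw_neg hleft 0).comp_neg
    simpa [← integrableOn_Iic_iff_integrableOn_Iio] using this
  have hlt_right := setIntegral_Ioi_zero_lt_of_eqOn_exp_neg_mul hc ha hw hw_le hright
  have hlt_left : ∫ s in Iic 0, w s < a + exp (-c * a) / c := by
    simpa [integral_comp_neg_Ioi] using
      setIntegral_Ioi_zero_lt_of_eqOn_exp_neg_mul hc ha hw_neg (fun s => hw_le (-s)) hleft
  refine ⟨?_, ?_⟩
  · rw [← integrableOn_univ, ← Iic_union_Ioi (a := (0 : ℝ))]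
    exact hint_left.union hint_right
  · rw [← intervalIntegral.integral_Iic_add_Ioi hint_left hint_right]
    linarith

/-- The speed `‖α'(s)‖` of the curve `α(s) = (s, 0, φ s)` in the induced metric `ds² - dφ²`. -/
noncomputable def inducedSpeed (φ : ℝ → ℝ) (s : ℝ) : ℝ := √(1 - deriv φ s ^ 2)

lemma inducedSpeed_le_one (φ : ℝ → ℝ) (s : ℝ) : inducedSpeed φ s ≤ 1 :=
  sqrt_le_one.2 (sub_le_self 1 (sq_nonneg _))

lemma continuous_inducedSpeed {φ : ℝ → ℝ} (hφ : ContDiff ℝ 1 φ) : Continuous (inducedSpeed φ) :=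
  (continuous_const.sub ((hφ.continuous_deriv le_rfl).pow 2)).sqrt

lemma inducedSpeed_eq_exp {φ : ℝ → ℝ} {s : ℝ} (hs : s ≠ 0)
    (hφ : φ =ᶠ[𝓝 s] fun t => decayHeight |t|) :
    inducedSpeed φ s = exp (-(1 / 2) * |s|) := by
  have hderiv : |deriv φ s| = |decaySlope (|s|)| := by
    rw [hφ.deriv_eq]
    exact abs_deriv_comp_abs (hasDerivAt_decayHeight _) hs
  rw [inducedSpeed, ← sq_abs, hderiv, sq_abs, sqrt_one_sub_decaySlope_sq (abs_nonneg s)]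
  ring_nf

lemma integrable_and_integral_inducedSpeed_lt {φ : ℝ → ℝ} (hφ : ContDiff ℝ 1 φ) (ha : 0 < a)
    (hφ_eq : ∀ s, a < |s| → φ s = decayHeight |s|) :
    Integrable (inducedSpeed φ) ∧ ∫ s, inducedSpeed φ s < 2 * (a + 2 / √(exp a)) := by
  have htail (s : ℝ) (hs : a < |s|) : inducedSpeed φ s = exp (-(1 / 2) * |s|) :=
    inducedSpeed_eq_exp (abs_pos.1 (ha.trans hs)) <|
      eventually_of_mem ((continuous_abs.isOpen_preimage _ isOpen_Ioi).mem_nhds hs) hφ_eq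
  have hbound : exp (-(1 / 2) * a) / (1 / 2) = 2 / √(exp a) := by
    rw [← exp_half, neg_mul, exp_neg]
    ring_nf
  rw [← hbound]
  exact integrable_and_integral_lt_of_eq_exp_neg_mul_abs one_half_pos ha
    (continuous_inducedSpeed hφ) (inducedSpeed_le_one φ) htail

end Length

/-- There is an entire spacelike graph in ℝ²×ℝ₁ (given by the function `u` of the paper,
which equals ∫₀^{|x₁|}√(1-e^{-s})ds for |x₁| ≥ 1) whose curve α(s) = (s,0,u(s,0)) has finite
induced length, bounded by 2(1+2/√e); hence the graph is not complete. -/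
theorem stmt0 :
    ∃ u : ℝ × ℝ → ℝ, ContDiff ℝ (⊤ : ℕ∞) u ∧ (∀ x, ‖fderiv ℝ u x‖ < 1) ∧
      (∀ x : ℝ × ℝ, 1 ≤ |x.1| →
        u x = ∫ s in Set.Ioc (0 : ℝ) |x.1|, Real.sqrt (1 - Real.exp (-s))) ∧
      ∫ s : ℝ, Real.sqrt (1 - (deriv (fun t : ℝ => u (t, 0)) s) ^ 2)
        < 2 * (1 + 2 / Real.sqrt (Real.exp 1)) := by
  refine ⟨fun x => profile x.1, contDiff_profile.comp contDiff_fst, fun x => ?_, fun x hx => ?_, ?_⟩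
  · calc ‖fderiv ℝ (fun x : ℝ × ℝ => profile x.1) x‖
        ≤ ‖fderiv ℝ profile x.1‖ :=
          norm_fderiv_comp_fst_le (contDiff_profile.differentiable (by simp) x.1)
      _ = |deriv profile x.1| := by rw [← norm_deriv_eq_norm_fderiv, norm_eq_abs]
      _ < 1 := abs_deriv_profile_lt_one x.1
  · exact (profile_of_one_le_abs hx).trans (decayHeight_eq_setIntegral (abs_nonneg x.1))
  · exact (integrable_and_integral_inducedSpeed_lt (contDiff_profile.of_le (by simp)) one_pos
      fun s hs => profile_of_one_le_abs hs.le).2
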